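/- The loss on class j is strictly decreasing in the density ratio of class j: if ζ ζ' : Fin K → ℝ are positive, ζ' j > ζ j, and ζ' k = ζ k for all k ≠ j, then L ζ' j < L ζ j. Consequently, overestimating the ratio ζ j (equivalently, underestimating the target class-conditional probability of class j) strictly underestimates the loss on class j. -/

import Mathlib

/-! After cross-multiplication, the inequality `Q ζ j < Q ζ' j` holds term by term in the
normalizing sums as soon as no relative increase `ζ' k / ζ k` exceeds that of class `j`, and it is
strict as soon as one of them is smaller. Only relative increases matter because `Q` is invariant
under rescaling `ζ`. -/

theorem div_sum_lt_div_sum {ι 𝕜 : Type*} [Field 𝕜] [LinearOrder 𝕜] [IsStrictOrderedRing 𝕜]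
    {s : Finset ι} {a b : ι → 𝕜} {x y : 𝕜} (ha : 0 < ∑ k ∈ s, a k) (hb : 0 < ∑ k ∈ s, b k)
    (hle : ∀ k ∈ s, x * b k ≤ y * a k) (hlt : ∃ k ∈ s, x * b k < y * a k) :
    x / ∑ k ∈ s, a k < y / ∑ k ∈ s, b k := by
  rw [div_lt_div_iff₀ ha hb, Finset.mul_sum, Finset.mul_sum]
  exact Finset.sum_lt_sum hle hlt

section Reweighting

variable {ι : Type*} [Fintype ι]

/-- The posterior probability `Q ζ j` of class `j` under the density ratios `ζ`, where `w k` is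
the product of the target posterior and the source prior of class `k`. -/
noncomputable def reweightedPosterior (w ζ : ι → ℝ) (j : ι) : ℝ :=
  w j * ζ j / ∑ k, w k * ζ k

/-- The loss `L ζ j` on class `j`: the negative log-likelihood of `j` under the reweighted
posterior. -/
noncomputable def reweightedLoss (w ζ : ι → ℝ) (j : ι) : ℝ :=
  -Real.log (reweightedPosterior w ζ j)

variable {w ζ ζ' : ι → ℝ} {j : ι}

theorem sum_weight_mul_ratio_pos [Nonempty ι] (hw : ∀ k, 0 < w k) (hζ : ∀ k, 0 < ζ k) :
    0 < ∑ k, w k * ζ k :=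
  Finset.sum_pos (fun k _ => mul_pos (hw k) (hζ k)) Finset.univ_nonempty

theorem reweightedPosterior_pos (hw : ∀ k, 0 < w k) (hζ : ∀ k, 0 < ζ k) :
    0 < reweightedPosterior w ζ j :=
  have : Nonempty ι := ⟨j⟩
  div_pos (mul_pos (hw j) (hζ j)) (sum_weight_mul_ratio_pos hw hζ)

theorem reweightedPosterior_lt_reweightedPosterior (hw : ∀ k, 0 < w k) (hζ : ∀ k, 0 < ζ k)
    (hζ' : ∀ k, 0 < ζ' k) (hle : ∀ k, ζ' k / ζ k ≤ ζ' j / ζ j)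
    (hlt : ∃ k, ζ' k / ζ k < ζ' j / ζ j) :
    reweightedPosterior w ζ j < reweightedPosterior w ζ' j := by
  have : Nonempty ι := ⟨j⟩
  simp only [reweightedPosterior, mul_div_assoc]
  refine mul_lt_mul_of_pos_left (div_sum_lt_div_sum (sum_weight_mul_ratio_pos hw hζ)
    (sum_weight_mul_ratio_pos hw hζ') (fun k _ => ?_) ?_) (hw j)
  · have cross_le : ζ j * ζ' k ≤ ζ' j * ζ k := by
      simpa only [mul_comm (ζ j)] using (div_le_div_iff₀ (hζ k) (hζ j)).1 (hle k)
    simpa only [mul_left_comm _ (w k)] using mul_le_mul_of_nonneg_left cross_le (hw k).le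
  · obtain ⟨k, hk⟩ := hlt
    have cross_lt : ζ j * ζ' k < ζ' j * ζ k := by
      simpa only [mul_comm (ζ j)] using (div_lt_div_iff₀ (hζ k) (hζ j)).1 hk
    refine ⟨k, Finset.mem_univ k, ?_⟩
    simpa only [mul_left_comm _ (w k)] using mul_lt_mul_of_pos_left cross_lt (hw k)

theorem loss_strictAnti_in_density_ratio_general (hw : ∀ k, 0 < w k) (hζ : ∀ k, 0 < ζ k)
    (hζ' : ∀ k, 0 < ζ' k) (hle : ∀ k, ζ' k / ζ k ≤ ζ' j / ζ j)
    (hlt : ∃ k, ζ' k / ζ k < ζ' j / ζ j) :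
    reweightedLoss w ζ' j < reweightedLoss w ζ j :=
  neg_lt_neg <| Real.log_lt_log (reweightedPosterior_pos hw hζ)
    (reweightedPosterior_lt_reweightedPosterior hw hζ hζ' hle hlt)

end Reweighting

/-- The loss on class `j` is strictly decreasing in the density ratio of class `j`:
overestimating `ζ j` strictly underestimates the loss on class `j`. -/
theorem loss_strictAnti_in_density_ratio
    (K : ℕ) (hK : 2 ≤ K) (j : Fin K)
    (w : Fin K → ℝ) (hw : ∀ k, 0 < w k)
    (Q L : (Fin K → ℝ) → Fin K → ℝ)
    (hQ : ∀ ζ i, Q ζ i = w i * ζ i / (∑ k, w k * ζ k))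
    (hL : ∀ ζ i, L ζ i = -Real.log (Q ζ i))
    (ζ ζ' : Fin K → ℝ)
    (hζ : ∀ k, 0 < ζ k) (hζ' : ∀ k, 0 < ζ' k)
    (hj : ζ j < ζ' j) (hne : ∀ k, k ≠ j → ζ' k = ζ k) :
    L ζ' j < L ζ j := by
  have : Nontrivial (Fin K) := Fin.nontrivial_iff_two_le.2 hK
  have hlt (k : Fin K) (hk : k ≠ j) : ζ' k / ζ k < ζ' j / ζ j := by
    rw [hne k hk, div_self (hζ k).ne']
    exact (one_lt_div (hζ j)).2 hj
  have hle (k : Fin K) : ζ' k / ζ k ≤ ζ' j / ζ j := by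
    obtain rfl | hk := eq_or_ne k j
    exacts [le_rfl, (hlt k hk).le]
  rw [hL, hL, hQ, hQ]
  exact loss_strictAnti_in_density_ratio_general hw hζ hζ' hle ((exists_ne j).imp hlt)
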